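/- arXiv:2406.02599 — 3 statements merged into one kernel-verified Lean document; each statement's English description precedes it below -/
import Mathlib

section
/- For every 1 ≤ j ≤ m−1 and every x ∈ [B_j, B_{j+1}), the mean absolute error of the mechanism admits the closed form Σ_{i=1}^{m} p(x,i)·|B_i − x| = Σ_{i=1}^{j} Σ_{r=j+1}^{m} q_j(i)·q_{m−j}(m−r+1) · 2(x − B_i)(B_r − x)/(B_r − B_i). -/
/-!
The mechanism is a mixture of two-point roundings: draw a lower bin `i ≤ j` with weight `q_j(i)`
and, independently, an upper bin `r > j` with weight `q_{m-j}(m-r+1)`, then round `x` to `B_i` or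
`B_r` with probabilities `(B_r - x) / (B_r - B_i)` and `(x - B_i) / (B_r - B_i)`. In the expected
error of one such rounding the two outcomes contribute equally, which is the origin of the
factor `2`.
-/

open Finset

/-- Output distribution of the quantization mechanism: for input `x ∈ [B j, B (j+1))`,
`outProb m B q j x i` is the probability that the output is bin `B i`. -/
noncomputable def outProb (m : ℕ) (B : ℕ → ℝ) (q : ℕ → ℕ → ℝ) (j : ℕ) (x : ℝ) (i : ℕ) : ℝ :=
  if i ≤ j then
    q j i * ∑ r ∈ Finset.Icc (j + 1) m, q (m - j) (m - r + 1) * ((B r - x) / (B r - B i))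
  else
    q (m - j) (m + 1 - i) * ∑ l ∈ Finset.Icc 1 j, q j l * ((x - B l) / (B i - B l))

lemma two_point_rounding_mean_abs_error {K : Type*} [Field K] [LinearOrder K]
    [IsStrictOrderedRing K] {u v x : K} (hu : u ≤ x) (hv : x ≤ v) :
    (v - x) / (v - u) * |u - x| + (x - u) / (v - u) * |v - x| =
      2 * (x - u) * (v - x) / (v - u) := by
  rw [abs_of_nonpos (sub_nonpos.2 hu), abs_of_nonneg (sub_nonneg.2 hv)]
  ring

lemma sum_mul_sum_add_sum_mul_sum {ι κ R : Type*} [CommSemiring R] (s : Finset ι) (t : Finset κ)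
    (a f : ι → R) (b g : κ → R) (k l : ι → κ → R) :
    ∑ i ∈ s, (a i * ∑ r ∈ t, b r * k i r) * f i + ∑ r ∈ t, (b r * ∑ i ∈ s, a i * l i r) * g r =
      ∑ i ∈ s, ∑ r ∈ t, a i * b r * (k i r * f i + l i r * g r) := by
  simp only [mul_sum, sum_mul]
  rw [sum_comm (s := t), ← sum_add_distrib]
  refine sum_congr rfl fun i _ => ?_
  rw [← sum_add_distrib]
  exact sum_congr rfl fun r _ => by ring

section OutProb

variable {m j : ℕ} (B : ℕ → ℝ) (q : ℕ → ℕ → ℝ) (x : ℝ)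

lemma outProb_of_le {i : ℕ} (hij : i ≤ j) :
    outProb m B q j x i =
      q j i * ∑ r ∈ Icc (j + 1) m, q (m - j) (m - r + 1) * ((B r - x) / (B r - B i)) :=
  if_pos hij

lemma outProb_of_lt {r : ℕ} (hjr : j < r) (hrm : r ≤ m) :
    outProb m B q j x r =
      q (m - j) (m - r + 1) * ∑ i ∈ Icc 1 j, q j i * ((x - B i) / (B r - B i)) := by
  rw [outProb, if_neg hjr.not_ge, Nat.sub_add_comm hrm]

lemma sum_outProb_mul (hj : j ≤ m) (f : ℕ → ℝ) :
    ∑ i ∈ Icc 1 m, outProb m B q j x i * f i =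
      ∑ i ∈ Icc 1 j, ∑ r ∈ Icc (j + 1) m, q j i * q (m - j) (m - r + 1) *
        ((B r - x) / (B r - B i) * f i + (x - B i) / (B r - B i) * f r) := by
  have hlower : ∑ i ∈ Icc 1 j, outProb m B q j x i * f i = ∑ i ∈ Icc 1 j,
      (q j i * ∑ r ∈ Icc (j + 1) m, q (m - j) (m - r + 1) * ((B r - x) / (B r - B i))) * f i :=
    sum_congr rfl fun i hi => by rw [outProb_of_le B q x (mem_Icc.1 hi).2]
  have hupper : ∑ r ∈ Icc (j + 1) m, outProb m B q j x r * f r = ∑ r ∈ Icc (j + 1) m,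
      (q (m - j) (m - r + 1) * ∑ i ∈ Icc 1 j, q j i * ((x - B i) / (B r - B i))) * f r :=
    sum_congr rfl fun r hr => by rw [outProb_of_lt B q x (mem_Icc.1 hr).1 (mem_Icc.1 hr).2]
  calc ∑ i ∈ Icc 1 m, outProb m B q j x i * f i
      = ∑ i ∈ Icc 1 j, outProb m B q j x i * f i +
          ∑ r ∈ Icc (j + 1) m, outProb m B q j x r * f r := by
        simpa only [← Icc_add_one_left_eq_Ioc, zero_add] using
          (sum_Ioc_consecutive _ (Nat.zero_le j) hj).symm
    _ = _ := by rw [hlower, hupper, sum_mul_sum_add_sum_mul_sum]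

end OutProb

theorem mae_closed_form_general {m j : ℕ} {B : ℕ → ℝ} (q : ℕ → ℕ → ℝ) {x : ℝ} (hj : j ≤ m)
    (hlower : ∀ i ∈ Icc 1 j, B i ≤ x) (hupper : ∀ r ∈ Icc (j + 1) m, x < B r) :
    ∑ i ∈ Icc 1 m, outProb m B q j x i * |B i - x| =
      ∑ i ∈ Icc 1 j, ∑ r ∈ Icc (j + 1) m,
        q j i * q (m - j) (m - r + 1) * (2 * (x - B i) * (B r - x) / (B r - B i)) := by
  rw [sum_outProb_mul B q x hj]
  refine sum_congr rfl fun i hi => sum_congr rfl fun r hr => ?_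
  rw [two_point_rounding_mean_abs_error (hlower i hi) (hupper r hr).le]

/-- Closed form of the mean absolute error: for `x ∈ [B j, B (j+1))`,
`Σ_{i=1}^m p(x,i)|B i − x| =
 Σ_{i=1}^j Σ_{r=j+1}^m q_j(i) q_{m−j}(m−r+1) · 2(x − B i)(B r − x)/(B r − B i)`. -/
theorem mae_closed_form
    (m : ℕ) (hm : 2 ≤ m)
    (B : ℕ → ℝ)
    (hB : ∀ i j : ℕ, 1 ≤ i → i < j → j ≤ m → B i < B j)
    (q : ℕ → ℕ → ℝ)
    (hq_nonneg : ∀ n i : ℕ, 1 ≤ n → n ≤ m → 0 ≤ q n i)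
    (hq_sum : ∀ n : ℕ, 1 ≤ n → n ≤ m → ∑ i ∈ Finset.Icc 1 n, q n i = 1)
    (j : ℕ) (hj1 : 1 ≤ j) (hj2 : j ≤ m - 1)
    (x : ℝ) (hx1 : B j ≤ x) (hx2 : x < B (j + 1)) :
    ∑ i ∈ Finset.Icc 1 m, outProb m B q j x i * |B i - x| =
      ∑ i ∈ Finset.Icc 1 j, ∑ r ∈ Finset.Icc (j + 1) m,
        q j i * q (m - j) (m - r + 1) * (2 * (x - B i) * (B r - x) / (B r - B i)) := by
  have hmono : MonotoneOn B (Set.Icc 1 m) :=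
    StrictMonoOn.monotoneOn fun i hi k hk hik => hB i k hi.1 hik hk.2
  have hj : j ∈ Set.Icc 1 m := ⟨hj1, by omega⟩
  have hj' : j + 1 ∈ Set.Icc 1 m := ⟨by omega, by omega⟩
  refine mae_closed_form_general q hj.2 (fun i hi => ?_) fun r hr => ?_
  · obtain ⟨hi1, hij⟩ := mem_Icc.1 hi
    exact (hmono ⟨hi1, hij.trans hj.2⟩ hj hij).trans hx1
  · obtain ⟨hjr, hrm⟩ := mem_Icc.1 hr
    exact hx2.trans_le (hmono hj' ⟨hj'.1.trans hjr, hrm⟩ hjr)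
end

section
/- (Lemma 1) For every 1 ≤ j ≤ m−1 and every x ∈ [B_j, B_{j+1}), the mean absolute error of the mechanism satisfies Σ_{i=1}^{m} p(x,i)·|B_i − x| ≤ (1/2)·(ζ_{m−j} + (B_{j+1} − B_j) + ζ_j). -/
/-!
The mechanism draws a left bin `l ≤ j` with probability `q j l` and, independently, a right bin
`r > j` with probability `q (m - j) (m + 1 - r)`, and then rounds `x` without bias to `B l` or
`B r`. Given the pair `(l, r)`, the mean absolute error is `2 (B r - x) (x - B l) / (B r - B l)`,
which by AM-GM is at most `(B r - B l) / 2`. Averaging over the pairs leaves half the difference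
between the means of the right and the left bin; by the symmetry of the bins these means are
`B (j + 1) + ζ_{m-j}` and `B j - ζ_j`.
-/

open Finset

/-- `ζ_n = Σ_{i=1}^n q_n(i) (B n − B i)`. -/
noncomputable def zeta (B : ℕ → ℝ) (q : ℕ → ℕ → ℝ) (n : ℕ) : ℝ :=
  ∑ i ∈ Finset.Icc 1 n, q n i * (B n - B i)

/-- The mean absolute error of unbiased rounding of `x ∈ [a, b]` to the endpoints: the output is `a`
with probability `(b - x) / (b - a)` and `b` with probability `(x - a) / (b - a)`. For `a = b` the
value is `0`. -/
noncomputable def roundingMAE (a b x : ℝ) : ℝ :=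
  (b - x) / (b - a) * |a - x| + (x - a) / (b - a) * |b - x|

lemma roundingMAE_eq {a b x : ℝ} (hax : a ≤ x) (hxb : x ≤ b) :
    roundingMAE a b x = 2 * ((b - x) * (x - a)) / (b - a) := by
  rw [roundingMAE, abs_of_nonpos (sub_nonpos.2 hax), abs_of_nonneg (sub_nonneg.2 hxb)]
  ring

lemma roundingMAE_le_half_sub {a b x : ℝ} (hax : a ≤ x) (hxb : x ≤ b) :
    roundingMAE a b x ≤ (b - a) / 2 := by
  have amgm : 4 * ((b - x) * (x - a)) ≤ (b - a) ^ 2 := by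
    nlinarith [sq_nonneg ((b - x) - (x - a))]
  rw [roundingMAE_eq hax hxb]
  exact div_le_of_le_mul₀ (by linarith) (by linarith) (by linarith)

section Mixture

variable {ι κ : Type*} {s : Finset ι} {t : Finset κ}

lemma sum_sum_mul_mul_sub {R : Type*} [CommRing R] {u a : ι → R} {w b : κ → R}
    (hu : ∑ i ∈ s, u i = 1) (hw : ∑ k ∈ t, w k = 1) :
    ∑ i ∈ s, ∑ k ∈ t, u i * w k * (b k - a i) = ∑ k ∈ t, w k * b k - ∑ i ∈ s, u i * a i := by
  calc ∑ i ∈ s, ∑ k ∈ t, u i * w k * (b k - a i)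
      = ∑ i ∈ s, ∑ k ∈ t, (u i * (w k * b k) - u i * a i * w k) :=
        sum_congr rfl fun i _ => sum_congr rfl fun k _ => by ring
    _ = (∑ i ∈ s, u i) * ∑ k ∈ t, w k * b k - (∑ i ∈ s, u i * a i) * ∑ k ∈ t, w k := by
        simp only [sum_sub_distrib, sum_mul_sum]
    _ = ∑ k ∈ t, w k * b k - ∑ i ∈ s, u i * a i := by rw [hu, hw, one_mul, mul_one]

lemma sum_sum_mul_roundingMAE_le {u a : ι → ℝ} {w b : κ → ℝ} {x : ℝ}
    (hu_nonneg : ∀ i ∈ s, 0 ≤ u i) (hw_nonneg : ∀ k ∈ t, 0 ≤ w k)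
    (hu : ∑ i ∈ s, u i = 1) (hw : ∑ k ∈ t, w k = 1)
    (ha : ∀ i ∈ s, a i ≤ x) (hb : ∀ k ∈ t, x ≤ b k) :
    ∑ i ∈ s, ∑ k ∈ t, u i * w k * roundingMAE (a i) (b k) x ≤
      (∑ k ∈ t, w k * b k - ∑ i ∈ s, u i * a i) / 2 := by
  calc ∑ i ∈ s, ∑ k ∈ t, u i * w k * roundingMAE (a i) (b k) x
      ≤ ∑ i ∈ s, ∑ k ∈ t, u i * w k * ((b k - a i) / 2) :=
        sum_le_sum fun i hi => sum_le_sum fun k hk =>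
          mul_le_mul_of_nonneg_left (roundingMAE_le_half_sub (ha i hi) (hb k hk))
            (mul_nonneg (hu_nonneg i hi) (hw_nonneg k hk))
    _ = (∑ k ∈ t, w k * b k - ∑ i ∈ s, u i * a i) / 2 := by
        rw [← sum_sum_mul_mul_sub hu hw]
        simp only [← mul_div_assoc, ← sum_div]

end Mixture

lemma sum_Icc_add_one_reflect {M : Type*} [AddCommMonoid M] (f : ℕ → M) {j m : ℕ}
    (hjm : j ≤ m) :
    ∑ r ∈ Icc (j + 1) m, f (m + 1 - r) = ∑ i ∈ Icc 1 (m - j), f i := by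
  simp only [← Ico_add_one_right_eq_Icc]
  rw [sum_Ico_reflect f (j + 1) (Nat.le_succ (m + 1)), Nat.add_sub_cancel_left,
    Nat.add_sub_add_right, Nat.sub_add_comm hjm]

lemma sum_Icc_consecutive {M : Type*} [AddCommMonoid M] (f : ℕ → M) {k m n : ℕ}
    (hkm : k ≤ m + 1) (hmn : m ≤ n) :
    ∑ i ∈ Icc k m, f i + ∑ i ∈ Icc (m + 1) n, f i = ∑ i ∈ Icc k n, f i := by
  simp only [← Ico_add_one_right_eq_Icc]
  exact sum_Ico_consecutive f hkm (Nat.succ_le_succ hmn)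

section Quantization

variable {m j : ℕ} {B : ℕ → ℝ} {q : ℕ → ℕ → ℝ}

lemma sum_outProb_mul_abs_sub (hjm : j ≤ m) (x : ℝ) :
    ∑ i ∈ Icc 1 m, outProb m B q j x i * |B i - x| =
      ∑ l ∈ Icc 1 j, ∑ r ∈ Icc (j + 1) m,
        q j l * q (m - j) (m + 1 - r) * roundingMAE (B l) (B r) x := by
  have left_half : ∑ l ∈ Icc 1 j, outProb m B q j x l * |B l - x| =
      ∑ l ∈ Icc 1 j, ∑ r ∈ Icc (j + 1) m,
        q j l * q (m - j) (m + 1 - r) * ((B r - x) / (B r - B l) * |B l - x|) := by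
    refine sum_congr rfl fun l hl => ?_
    rw [outProb, if_pos (mem_Icc.1 hl).2, mul_sum, sum_mul]
    refine sum_congr rfl fun r hr => ?_
    rw [← Nat.sub_add_comm (mem_Icc.1 hr).2]
    ring
  have right_half : ∑ r ∈ Icc (j + 1) m, outProb m B q j x r * |B r - x| =
      ∑ l ∈ Icc 1 j, ∑ r ∈ Icc (j + 1) m,
        q j l * q (m - j) (m + 1 - r) * ((x - B l) / (B r - B l) * |B r - x|) := by
    rw [sum_comm]
    refine sum_congr rfl fun r hr => ?_
    rw [outProb, if_neg (Nat.not_le.2 (mem_Icc.1 hr).1), mul_sum, sum_mul]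
    exact sum_congr rfl fun l _ => by ring
  rw [← sum_Icc_consecutive _ (Nat.le_add_left 1 j) hjm, left_half, right_half]
  simp only [roundingMAE, mul_add, sum_add_distrib]

lemma sum_mul_eq_sub_zeta {n : ℕ} (hq : ∑ i ∈ Icc 1 n, q n i = 1) :
    ∑ i ∈ Icc 1 n, q n i * B i = B n - zeta B q n := by
  simp only [zeta, mul_sub, sum_sub_distrib, ← sum_mul, hq, one_mul, sub_sub_cancel]

lemma sum_reflect_mul_eq_add_zeta (hjm : j < m)
    (hsym : ∀ i, 1 ≤ i → i ≤ m → B i = -B (m + 1 - i))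
    (hq : ∑ i ∈ Icc 1 (m - j), q (m - j) i = 1) :
    ∑ r ∈ Icc (j + 1) m, q (m - j) (m + 1 - r) * B r = B (j + 1) + zeta B q (m - j) := by
  have hBj : B (j + 1) = -B (m - j) := by
    rw [hsym (j + 1) (by omega) hjm, Nat.add_sub_add_right]
  calc ∑ r ∈ Icc (j + 1) m, q (m - j) (m + 1 - r) * B r
      = ∑ r ∈ Icc (j + 1) m, q (m - j) (m + 1 - r) * -B (m + 1 - r) := by
        refine sum_congr rfl fun r hr => ?_
        rw [mem_Icc] at hr
        rw [← hsym r (by omega) hr.2]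
    _ = -∑ i ∈ Icc 1 (m - j), q (m - j) i * B i := by
        rw [sum_Icc_add_one_reflect (fun i => q (m - j) i * -B i) hjm.le]
        simp only [mul_neg, sum_neg_distrib]
    _ = B (j + 1) + zeta B q (m - j) := by
        rw [sum_mul_eq_sub_zeta hq, hBj]
        ring

end Quantization

/-- (Lemma 1) For every `x ∈ [B j, B (j+1))`, the mean absolute error satisfies
`Σ_{i=1}^m p(x,i)|B i − x| ≤ (1/2)(ζ_{m−j} + (B (j+1) − B j) + ζ_j)`. -/
theorem mae_upper_bound
    (m : ℕ) (hm : 2 ≤ m)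
    (B : ℕ → ℝ)
    (hB : ∀ i j : ℕ, 1 ≤ i → i < j → j ≤ m → B i < B j)
    (hsym : ∀ i : ℕ, 1 ≤ i → i ≤ m → B i = -B (m + 1 - i))
    (q : ℕ → ℕ → ℝ)
    (hq_nonneg : ∀ n i : ℕ, 1 ≤ n → n ≤ m → 0 ≤ q n i)
    (hq_sum : ∀ n : ℕ, 1 ≤ n → n ≤ m → ∑ i ∈ Finset.Icc 1 n, q n i = 1)
    (j : ℕ) (hj1 : 1 ≤ j) (hj2 : j ≤ m - 1)
    (x : ℝ) (hx1 : B j ≤ x) (hx2 : x < B (j + 1)) :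
    ∑ i ∈ Finset.Icc 1 m, outProb m B q j x i * |B i - x| ≤
      (1 / 2) * (zeta B q (m - j) + (B (j + 1) - B j) + zeta B q j) := by
  have hjm : j < m := by omega
  have hmono : MonotoneOn B (Set.Icc 1 m) :=
    StrictMonoOn.monotoneOn fun i hi k hk hik => hB i k hi.1 hik hk.2
  have hleft : ∀ l ∈ Icc 1 j, B l ≤ x := fun l hl => by
    rw [mem_Icc] at hl
    exact (hmono ⟨hl.1, by omega⟩ ⟨hj1, hjm.le⟩ hl.2).trans hx1
  have hright : ∀ r ∈ Icc (j + 1) m, x ≤ B r := fun r hr => by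
    rw [mem_Icc] at hr
    exact hx2.le.trans (hmono ⟨by omega, hjm⟩ ⟨by omega, hr.2⟩ hr.1)
  have hqj := hq_sum j hj1 hjm.le
  have hqm := hq_sum (m - j) (by omega) (by omega)
  rw [sum_outProb_mul_abs_sub hjm.le]
  refine (sum_sum_mul_roundingMAE_le (fun l _ => hq_nonneg j l hj1 hjm.le)
    (fun r _ => hq_nonneg (m - j) (m + 1 - r) (by omega) (by omega)) hqj
    ((sum_Icc_add_one_reflect (q (m - j)) hjm.le).trans hqm) hleft hright).trans_eq ?_
  rw [sum_mul_eq_sub_zeta hqj, sum_reflect_mul_eq_add_zeta hjm hsym hqm]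
  ring
end

section
/- (Theorem 4, general input distribution) For every nonnegative integrable function f on [−c, c], the density-weighted mean absolute error satisfies ∫_{−c}^{c} ( Σ_{i=1}^{m} p(x,i)·|B_i − x| )·f(x) dx ≤ Σ_{n=s−1}^{t} ( ζ^r_{m−n} + (B_{n+1} − B_n) + ζ^l_n ) · ∫_{max(B_n,−c)}^{min(B_{n+1},c)} f(x) dx. -/
/-!
Fix `x ∈ [B n, B (n + 1)]`. Each factor `(B r - x) / (B r - B i)` with `i ≤ n < r` is at most `1`,
hence so is any average of such factors. Thus `p(x, i) ≤ q^l_n(i)` on the left of `x`, and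
symmetrically `p(x, i) ≤ q^r_{m-n}(m + 1 - i)` on its right. The mean absolute error at `x` is
therefore at most
`∑_{i ≤ n} q^l_n(i) (x - B i) + ∑_{i > n} q^r_{m-n}(m + 1 - i) (B i - x)`
`  = (x - B n + ζ^l_n) + (B (n + 1) - x + ζ^r_{m-n})`,
where `x` cancels. On each cell the error is a continuous function of `x`, so its product with `f`
is integrable and the constant bounds can be integrated against `f` cell by cell, the cells being
delimited by the bins projected onto the interval of integration.
-/

open Finset

/-- Output distribution of the quantization mechanism with separate left/right selection
distributions `ql`, `qr`: for input `x ∈ [B j, B (j+1))`, `outProb2 m B ql qr j x i` is the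
probability that the output is bin `B i`. -/
noncomputable def outProb2 (m : ℕ) (B : ℕ → ℝ) (ql qr : ℕ → ℕ → ℝ) (j : ℕ) (x : ℝ) (i : ℕ) : ℝ :=
  if i ≤ j then
    ql j i * ∑ r ∈ Finset.Icc (j + 1) m, qr (m - j) (m - r + 1) * ((B r - x) / (B r - B i))
  else
    qr (m - j) (m + 1 - i) * ∑ l ∈ Finset.Icc 1 j, ql j l * ((x - B l) / (B i - B l))

/-- The index `j ∈ {1,…,m−1}` such that `x ∈ [B j, B (j+1))` (for increasing bins and
`x` in range): the largest `j ≤ m−1` with `B j ≤ x`. -/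
noncomputable def binIdx (m : ℕ) (B : ℕ → ℝ) (x : ℝ) : ℕ :=
  ((Finset.Icc 1 (m - 1)).filter (fun j => B j ≤ x)).sup id

/-- The output distribution as a function of the input `x`. -/
noncomputable def pFun2 (m : ℕ) (B : ℕ → ℝ) (ql qr : ℕ → ℕ → ℝ) (x : ℝ) (i : ℕ) : ℝ :=
  outProb2 m B ql qr (binIdx m B x) x i

/-- `ζ^l_j = Σ_{i=1}^j q^l_j(i)(B j − B i)`. -/
noncomputable def zetaL (B : ℕ → ℝ) (ql : ℕ → ℕ → ℝ) (j : ℕ) : ℝ :=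
  ∑ i ∈ Finset.Icc 1 j, ql j i * (B j - B i)

/-- `ζ^r_{m−j} = Σ_{i=j+1}^m q^r_{m−j}(m−i+1)(B i − B (j+1))` (indexed here by `j`). -/
noncomputable def zetaR (m : ℕ) (B : ℕ → ℝ) (qr : ℕ → ℕ → ℝ) (j : ℕ) : ℝ :=
  ∑ i ∈ Finset.Icc (j + 1) m, qr (m - j) (m - i + 1) * (B i - B (j + 1))

/-- A weight function `q : ℕ → ℝ` that restricts to a probability mass function on `{1, …, n}`;
its values outside `{1, …, n}` are arbitrary. -/
structure IsBinPMF (n : ℕ) (q : ℕ → ℝ) : Prop where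
  nonneg : ∀ i ∈ Icc 1 n, 0 ≤ q i
  sum_eq_one : ∑ i ∈ Icc 1 n, q i = 1

/-- The mean absolute error at `x` of the output distribution attached to the `n`-th cell
`[B n, B (n + 1))`. The cell is a parameter, so that this is defined and continuous for all real
`x`; the error of the mechanism itself is the case `n = binIdx m B x`. -/
noncomputable def cellError (m : ℕ) (B : ℕ → ℝ) (ql qr : ℕ → ℕ → ℝ) (n : ℕ) (x : ℝ) : ℝ :=
  ∑ i ∈ Icc 1 m, outProb2 m B ql qr n x i * |B i - x|

/-- The bound `ζ^r_{m-n} + (B (n+1) - B n) + ζ^l_n` on the mean absolute error over the `n`-th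
cell. -/
noncomputable def cellBound (m : ℕ) (B : ℕ → ℝ) (ql qr : ℕ → ℕ → ℝ) (n : ℕ) : ℝ :=
  zetaR m B qr n + (B (n + 1) - B n) + zetaL B ql n

lemma sum_Icc_one_eq_add {M : Type*} [AddCommMonoid M] (g : ℕ → M) {n m : ℕ} (hnm : n ≤ m) :
    ∑ i ∈ Icc 1 m, g i = ∑ i ∈ Icc 1 n, g i + ∑ i ∈ Icc (n + 1) m, g i := by
  simp only [← Ico_add_one_right_eq_Icc]
  exact (sum_Ico_consecutive g (by lia) (by lia)).symm

lemma sum_mul_add_const {ι R : Type*} [NonAssocSemiring R] {s : Finset ι} {w : ι → R}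
    (hw : ∑ i ∈ s, w i = 1) (g : ι → R) (d : R) :
    ∑ i ∈ s, w i * (g i + d) = ∑ i ∈ s, w i * g i + d := by
  simp only [mul_add, sum_add_distrib, ← sum_mul, hw, one_mul]

namespace IsBinPMF

variable {m n : ℕ} {q : ℕ → ℝ}

lemma nonneg_reflect (hq : IsBinPMF (m - n) q) : ∀ i ∈ Icc (n + 1) m, 0 ≤ q (m - i + 1) := by
  intro i hi
  rw [mem_Icc] at hi
  exact hq.nonneg _ (mem_Icc.2 (by lia))

lemma sum_reflect_eq_one (hq : IsBinPMF (m - n) q) :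
    ∑ i ∈ Icc (n + 1) m, q (m - i + 1) = 1 := by
  rw [← hq.sum_eq_one]
  refine sum_nbij' (fun i => m - i + 1) (fun i => m - i + 1) ?_ ?_ ?_ ?_ fun _ _ => rfl <;>
    simp only [mem_Icc] <;> lia

end IsBinPMF

section CellError

variable {m n : ℕ} {B : ℕ → ℝ} {ql qr : ℕ → ℕ → ℝ} {x : ℝ}

lemma binIdx_eq_of_mem_Ico (hB : StrictMonoOn B (Set.Icc 1 m)) (hn : 1 ≤ n) (hnm : n < m)
    (hx : x ∈ Set.Ico (B n) (B (n + 1))) : binIdx m B x = n := by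
  refine le_antisymm (Finset.sup_le fun j hj => ?_) (le_sup (f := id) ?_)
  · obtain ⟨hjm, hjx⟩ := mem_filter.1 hj
    rw [mem_Icc] at hjm
    have hjn : j < n + 1 :=
      (hB.lt_iff_lt ⟨by lia, by lia⟩ ⟨by lia, by lia⟩).1 (hjx.trans_lt hx.2)
    exact Nat.le_of_lt_succ hjn
  · exact mem_filter.2 ⟨mem_Icc.2 (by lia), hx.1⟩

lemma sum_pFun2_mul_abs_eq_cellError (hB : StrictMonoOn B (Set.Icc 1 m)) (hn : 1 ≤ n) (hnm : n < m)
    (hx : x ∈ Set.Ico (B n) (B (n + 1))) :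
    ∑ i ∈ Icc 1 m, pFun2 m B ql qr x i * |B i - x| = cellError m B ql qr n x := by
  simp only [pFun2, binIdx_eq_of_mem_Ico hB hn hnm hx, cellError]

lemma le_of_mem_Icc_one (hB : StrictMonoOn B (Set.Icc 1 m)) (hnm : n ≤ m) (hx : B n ≤ x) {i : ℕ}
    (hi : i ∈ Icc 1 n) : B i ≤ x := by
  rw [mem_Icc] at hi
  exact (hB.monotoneOn ⟨by lia, by lia⟩ ⟨by lia, by lia⟩ hi.2).trans hx

lemma le_of_mem_Icc_add_one (hB : StrictMonoOn B (Set.Icc 1 m)) (hx : x ≤ B (n + 1)) {i : ℕ}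
    (hi : i ∈ Icc (n + 1) m) : x ≤ B i := by
  rw [mem_Icc] at hi
  exact hx.trans (hB.monotoneOn ⟨by lia, by lia⟩ ⟨by lia, by lia⟩ hi.1)

lemma outProb2_le_left (hB : StrictMonoOn B (Set.Icc 1 m)) (hl : IsBinPMF n (ql n))
    (hr : IsBinPMF (m - n) (qr (m - n))) (hnm : n < m) (hx : B n ≤ x) {i : ℕ}
    (hi : i ∈ Icc 1 n) : outProb2 m B ql qr n x i ≤ ql n i := by
  rw [outProb2, if_pos (mem_Icc.1 hi).2]
  refine mul_le_of_le_one_right (hl.nonneg i hi) <|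
    (convex_Iic (1 : ℝ)).sum_mem hr.nonneg_reflect hr.sum_reflect_eq_one fun r hr => ?_
  have hix : B i ≤ x := le_of_mem_Icc_one hB hnm.le hx hi
  rw [mem_Icc] at hi hr
  have hir : B i < B r := hB ⟨by lia, by lia⟩ ⟨by lia, by lia⟩ (by lia)
  exact div_le_one_of_le₀ (sub_le_sub_left hix _) (sub_nonneg.2 hir.le)

lemma outProb2_le_right (hB : StrictMonoOn B (Set.Icc 1 m)) (hl : IsBinPMF n (ql n))
    (hr : IsBinPMF (m - n) (qr (m - n))) (hx : x ≤ B (n + 1)) {i : ℕ}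
    (hi : i ∈ Icc (n + 1) m) : outProb2 m B ql qr n x i ≤ qr (m - n) (m - i + 1) := by
  have hxi : x ≤ B i := le_of_mem_Icc_add_one hB hx hi
  have hq : 0 ≤ qr (m - n) (m - i + 1) := hr.nonneg_reflect i hi
  rw [mem_Icc] at hi
  rw [outProb2, if_neg (by lia), show m + 1 - i = m - i + 1 by lia]
  refine mul_le_of_le_one_right hq <|
    (convex_Iic (1 : ℝ)).sum_mem hl.nonneg hl.sum_eq_one fun l hl => ?_
  rw [mem_Icc] at hl
  have hli : B l < B i := hB ⟨by lia, by lia⟩ ⟨by lia, by lia⟩ (by lia)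
  exact div_le_one_of_le₀ (sub_le_sub_right hxi _) (sub_nonneg.2 hli.le)

lemma sum_left_mul_sub (hl : IsBinPMF n (ql n)) (x : ℝ) :
    ∑ i ∈ Icc 1 n, ql n i * (x - B i) = zetaL B ql n + (x - B n) := by
  rw [zetaL, ← sum_mul_add_const hl.sum_eq_one]
  simp only [sub_add_sub_cancel']

lemma sum_right_mul_sub (hr : IsBinPMF (m - n) (qr (m - n))) (x : ℝ) :
    ∑ i ∈ Icc (n + 1) m, qr (m - n) (m - i + 1) * (B i - x) =
      zetaR m B qr n + (B (n + 1) - x) := by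
  rw [zetaR, ← sum_mul_add_const hr.sum_reflect_eq_one]
  simp only [sub_add_sub_cancel]

theorem cellError_le_cellBound (hB : StrictMonoOn B (Set.Icc 1 m)) (hl : IsBinPMF n (ql n))
    (hr : IsBinPMF (m - n) (qr (m - n))) (hnm : n < m) (hx : x ∈ Set.Icc (B n) (B (n + 1))) :
    cellError m B ql qr n x ≤ cellBound m B ql qr n :=
  calc
    cellError m B ql qr n x
      = ∑ i ∈ Icc 1 n, outProb2 m B ql qr n x i * |B i - x| +
          ∑ i ∈ Icc (n + 1) m, outProb2 m B ql qr n x i * |B i - x| :=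
        sum_Icc_one_eq_add _ hnm.le
    _ ≤ ∑ i ∈ Icc 1 n, ql n i * (x - B i) +
          ∑ i ∈ Icc (n + 1) m, qr (m - n) (m - i + 1) * (B i - x) := by
        refine add_le_add (sum_le_sum fun i hi => ?_) (sum_le_sum fun i hi => ?_)
        · have hix := le_of_mem_Icc_one hB hnm.le hx.1 hi
          rw [abs_sub_comm, abs_of_nonneg (sub_nonneg.2 hix)]
          exact mul_le_mul_of_nonneg_right (outProb2_le_left hB hl hr hnm hx.1 hi)
            (sub_nonneg.2 hix)
        · have hxi := le_of_mem_Icc_add_one hB hx.2 hi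
          rw [abs_of_nonneg (sub_nonneg.2 hxi)]
          exact mul_le_mul_of_nonneg_right (outProb2_le_right hB hl hr hx.2 hi)
            (sub_nonneg.2 hxi)
    _ = (zetaL B ql n + (x - B n)) + (zetaR m B qr n + (B (n + 1) - x)) := by
        rw [sum_left_mul_sub hl, sum_right_mul_sub hr]
    _ = cellBound m B ql qr n := by
        rw [cellBound]
        ring

lemma continuous_cellError (m : ℕ) (B : ℕ → ℝ) (ql qr : ℕ → ℕ → ℝ) (n : ℕ) :
    Continuous (cellError m B ql qr n) := by
  refine continuous_finsetSum _ fun i _ => Continuous.mul ?_ (by fun_prop)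
  unfold outProb2
  split_ifs <;> fun_prop

end CellError

section CutPoint

variable {B : ℕ → ℝ} {a b : ℝ}

/-- The `n`-th bin value projected onto `[a, b]`: these points cut `[a, b]` along the cells
`[B n, B (n + 1))`. They are defined by `Set.projIcc` and not as the endpoints `max (B n) a` and
`min (B (n + 1)) b`, so that the right endpoint of a piece is the left endpoint of the next one. -/
noncomputable def cutPoint (B : ℕ → ℝ) (hab : a ≤ b) (n : ℕ) : ℝ :=
  Set.projIcc a b hab (B n)

lemma cutPoint_mem_Icc (B : ℕ → ℝ) (hab : a ≤ b) (n : ℕ) : cutPoint B hab n ∈ Set.Icc a b :=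
  (Set.projIcc a b hab (B n)).2

lemma cutPoint_eq_max (hab : a ≤ b) {n : ℕ} (hn : B n ≤ b) : cutPoint B hab n = max (B n) a := by
  rw [cutPoint, Set.coe_projIcc, min_eq_right hn, max_comm]

lemma cutPoint_eq_min (hab : a ≤ b) {n : ℕ} (hn : a ≤ B n) : cutPoint B hab n = min (B n) b := by
  rw [cutPoint, Set.coe_projIcc, max_eq_right (le_min hab hn), min_comm]

lemma cutPoint_le_cutPoint (hab : a ≤ b) {k l : ℕ} (h : B k ≤ B l) :
    cutPoint B hab k ≤ cutPoint B hab l :=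
  Set.monotone_projIcc hab h

lemma Ioo_cutPoint_subset_Ioo (B : ℕ → ℝ) (hab : a ≤ b) (k l : ℕ) :
    Set.Ioo (cutPoint B hab k) (cutPoint B hab l) ⊆ Set.Ioo (B k) (B l) := by
  intro x hx
  have hax : a < x := (cutPoint_mem_Icc B hab k).1.trans_lt hx.1
  have hxb : x < b := hx.2.trans_le (cutPoint_mem_Icc B hab l).2
  simp only [cutPoint, Set.coe_projIcc, Set.mem_Ioo, max_lt_iff, lt_max_iff, min_lt_iff,
    lt_min_iff] at hx
  exact ⟨hx.1.2.resolve_left hxb.not_gt, (hx.2.resolve_left hax.not_gt).2⟩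

lemma intervalIntegrable_cutPoint {μ : MeasureTheory.Measure ℝ} {f : ℝ → ℝ}
    (hf : IntervalIntegrable f μ a b) (B : ℕ → ℝ) (hab : a ≤ b) (k l : ℕ) :
    IntervalIntegrable f μ (cutPoint B hab k) (cutPoint B hab l) := by
  refine hf.mono_set ?_
  rw [Set.uIcc_of_le hab]
  exact Set.uIcc_subset_Icc (cutPoint_mem_Icc B hab k) (cutPoint_mem_Icc B hab l)

end CutPoint

section Integration

variable {μ : MeasureTheory.Measure ℝ} [MeasureTheory.NullSingletonClass μ] {f : ℝ → ℝ}

theorem intervalIntegral_mul_le_sum_mul_intervalIntegral {g : ℝ → ℝ} {u C : ℕ → ℝ} {k l : ℕ}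
    (hkl : k ≤ l)
    (hu : ∀ n ∈ Set.Ico k l, u n ≤ u (n + 1))
    (hf : ∀ n ∈ Set.Ico k l, IntervalIntegrable f μ (u n) (u (n + 1)))
    (hgf : ∀ n ∈ Set.Ico k l, IntervalIntegrable (fun x => g x * f x) μ (u n) (u (n + 1)))
    (hf_nonneg : ∀ n ∈ Set.Ico k l, ∀ x ∈ Set.Ioo (u n) (u (n + 1)), 0 ≤ f x)
    (hgC : ∀ n ∈ Set.Ico k l, ∀ x ∈ Set.Ioo (u n) (u (n + 1)), g x ≤ C n) :
    ∫ x in u k..u l, g x * f x ∂μ ≤ ∑ n ∈ Ico k l, C n * ∫ x in u n..u (n + 1), f x ∂μ := by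
  rw [← intervalIntegral.sum_integral_adjacent_intervals_Ico hkl hgf]
  refine sum_le_sum fun n hn => ?_
  replace hn : n ∈ Set.Ico k l := mem_Ico.1 hn
  rw [← intervalIntegral.integral_const_mul]
  exact intervalIntegral.integral_mono_on_of_le_Ioo (hu n hn) (hgf n hn) ((hf n hn).const_mul _)
    fun x hx => mul_le_mul_of_nonneg_right (hgC n hn x hx) (hf_nonneg n hn x hx)

variable {m k l t : ℕ} {B : ℕ → ℝ} {ql qr : ℕ → ℕ → ℝ} {a b : ℝ}

lemma intervalIntegrable_pFun2_mul (hB : StrictMonoOn B (Set.Icc 1 m)) {n : ℕ} (hn : 1 ≤ n)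
    (hnm : n < m) {y z : ℝ} (hyz : y ≤ z) (hcell : Set.Ioo y z ⊆ Set.Ioo (B n) (B (n + 1)))
    (hf : IntervalIntegrable f μ y z) :
    IntervalIntegrable (fun x => (∑ i ∈ Icc 1 m, pFun2 m B ql qr x i * |B i - x|) * f x) μ y z := by
  refine (hf.continuousOn_mul (continuous_cellError m B ql qr n).continuousOn).congr_uIoo
    fun x hx => ?_
  rw [Set.uIoo_of_le hyz] at hx
  rw [sum_pFun2_mul_abs_eq_cellError hB hn hnm (Set.Ioo_subset_Ico_self (hcell hx))]

theorem intervalIntegral_cutPoint_pFun2_mul_le (hB : StrictMonoOn B (Set.Icc 1 m))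
    (hql : ∀ n ∈ Icc 1 m, IsBinPMF n (ql n)) (hqr : ∀ n ∈ Icc 1 m, IsBinPMF n (qr n))
    (hk : 1 ≤ k) (hkl : k ≤ l) (hlm : l ≤ m) (hab : a ≤ b)
    (hf_nonneg : ∀ x ∈ Set.Icc a b, 0 ≤ f x) (hf : IntervalIntegrable f μ a b) :
    ∫ x in cutPoint B hab k..cutPoint B hab l,
        (∑ i ∈ Icc 1 m, pFun2 m B ql qr x i * |B i - x|) * f x ∂μ ≤
      ∑ n ∈ Ico k l, cellBound m B ql qr n *
        ∫ x in cutPoint B hab n..cutPoint B hab (n + 1), f x ∂μ := by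
  have hcell (n : ℕ) := Ioo_cutPoint_subset_Ioo B hab n (n + 1)
  have hf_cell (n : ℕ) := intervalIntegrable_cutPoint hf B hab n (n + 1)
  have hcut : ∀ n ∈ Set.Ico k l, cutPoint B hab n ≤ cutPoint B hab (n + 1) := by
    rintro n ⟨hkn, hnl⟩
    exact cutPoint_le_cutPoint hab (hB.monotoneOn ⟨by lia, by lia⟩ ⟨by lia, by lia⟩ n.le_succ)
  refine intervalIntegral_mul_le_sum_mul_intervalIntegral hkl hcut (fun n _ => hf_cell n)
    ?integrable ?nonneg ?bound
  case integrable =>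
    intro n hn
    exact intervalIntegrable_pFun2_mul hB (hk.trans hn.1) (hn.2.trans_le hlm) (hcut n hn)
      (hcell n) (hf_cell n)
  case nonneg =>
    intro n _ x hx
    exact hf_nonneg x ⟨(cutPoint_mem_Icc B hab n).1.trans hx.1.le,
      hx.2.le.trans (cutPoint_mem_Icc B hab (n + 1)).2⟩
  case bound =>
    rintro n ⟨hkn, hnl⟩ x hx
    rw [sum_pFun2_mul_abs_eq_cellError hB (by lia) (by lia)
      (Set.Ioo_subset_Ico_self (hcell n hx))]
    exact cellError_le_cellBound hB (hql n (mem_Icc.2 (by lia)))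
      (hqr (m - n) (mem_Icc.2 (by lia))) (by lia) (Set.Ioo_subset_Icc_self (hcell n hx))

theorem general_input_mae_bound_general (hB : StrictMonoOn B (Set.Icc 1 m))
    (hql : ∀ n ∈ Icc 1 m, IsBinPMF n (ql n)) (hqr : ∀ n ∈ Icc 1 m, IsBinPMF n (qr n))
    (hk : 1 ≤ k) (hkt : k ≤ t) (htm : t < m) (hab : a ≤ b)
    (hka : B k ≤ a) (hak : a ≤ B (k + 1)) (htb : B t ≤ b) (hbt : b ≤ B (t + 1))
    (hf_nonneg : ∀ x ∈ Set.Icc a b, 0 ≤ f x) (hf : IntervalIntegrable f μ a b) :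
    ∫ x in a..b, (∑ i ∈ Icc 1 m, pFun2 m B ql qr x i * |B i - x|) * f x ∂μ ≤
      ∑ n ∈ Icc k t, (zetaR m B qr n + (B (n + 1) - B n) + zetaL B ql n) *
        ∫ x in max (B n) a..min (B (n + 1)) b, f x ∂μ := by
  have hB_mono {i j : ℕ} (hi : k ≤ i) (hij : i ≤ j) (hj : j ≤ t + 1) : B i ≤ B j :=
    hB.monotoneOn ⟨by lia, by lia⟩ ⟨by lia, by lia⟩ hij
  have hfirst : cutPoint B hab k = a := by
    rw [cutPoint_eq_max hab (hka.trans hab), max_eq_right hka]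
  have hlast : cutPoint B hab (t + 1) = b := by
    rw [cutPoint_eq_min hab (hab.trans hbt), min_eq_right hbt]
  have hbound := intervalIntegral_cutPoint_pFun2_mul_le (l := t + 1) hB hql hqr hk (by lia)
    (by lia) hab hf_nonneg hf
  rw [hfirst, hlast, Ico_add_one_right_eq_Icc] at hbound
  refine hbound.trans_eq (sum_congr rfl fun n hn => ?_)
  obtain ⟨hkn, hnt⟩ := mem_Icc.1 hn
  rw [cellBound, cutPoint_eq_max hab ((hB_mono hkn hnt (by lia)).trans htb),
    cutPoint_eq_min hab (hak.trans (hB_mono (by lia) (by lia) (by lia)))]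

end Integration

/-- (Theorem 4, general input distribution) For every nonnegative integrable `f` on `[−c,c]`,
`∫_{−c}^c (Σ_{i=1}^m p(x,i)|B i − x|) f(x) dx ≤
 Σ_{n=s−1}^t (ζ^r_{m−n} + (B (n+1) − B n) + ζ^l_n) ∫_{max(B n,−c)}^{min(B (n+1),c)} f(x) dx`. -/
theorem general_input_mae_bound
    (m : ℕ) (hm : 2 ≤ m)
    (c Δ : ℝ) (hc : 0 < c) (hΔ : 0 < Δ)
    (B : ℕ → ℝ)
    (hB : ∀ i j : ℕ, 1 ≤ i → i < j → j ≤ m → B i < B j)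
    (hB1 : B 1 = -c - Δ) (hBm : B m = c + Δ)
    (ql qr : ℕ → ℕ → ℝ)
    (hql_nonneg : ∀ n i : ℕ, 1 ≤ n → n ≤ m → 0 ≤ ql n i)
    (hql_sum : ∀ n : ℕ, 1 ≤ n → n ≤ m → ∑ i ∈ Finset.Icc 1 n, ql n i = 1)
    (hqr_nonneg : ∀ n i : ℕ, 1 ≤ n → n ≤ m → 0 ≤ qr n i)
    (hqr_sum : ∀ n : ℕ, 1 ≤ n → n ≤ m → ∑ i ∈ Finset.Icc 1 n, qr n i = 1)
    (s t : ℕ) (hs2 : 2 ≤ s) (hst : s ≤ t) (ht : t ≤ m - 1)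
    (hs_lt : B (s - 1) < -c) (hs_le : -c ≤ B s)
    (ht_le : B t ≤ c) (ht_lt : c < B (t + 1))
    (f : ℝ → ℝ)
    (hf_nonneg : ∀ x ∈ Set.Icc (-c) c, 0 ≤ f x)
    (hf_int : IntervalIntegrable f MeasureTheory.volume (-c) c) :
    (∫ x in (-c)..c, (∑ i ∈ Finset.Icc 1 m, pFun2 m B ql qr x i * |B i - x|) * f x) ≤
      ∑ n ∈ Finset.Icc (s - 1) t,
        (zetaR m B qr n + (B (n + 1) - B n) + zetaL B ql n) *
          ∫ x in (max (B n) (-c))..(min (B (n + 1)) c), f x := by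
  obtain _ | k := s
  · lia
  exact general_input_mae_bound_general (fun i hi j hj hij => hB i j hi.1 hij hj.2)
    (fun n hn => have h := mem_Icc.1 hn; ⟨fun i _ => hql_nonneg n i h.1 h.2, hql_sum n h.1 h.2⟩)
    (fun n hn => have h := mem_Icc.1 hn; ⟨fun i _ => hqr_nonneg n i h.1 h.2, hqr_sum n h.1 h.2⟩)
    (by lia) (by lia) (by lia) (by linarith) hs_lt.le hs_le ht_le ht_lt.le hf_nonneg hf_int
end
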